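/- For n ≥ 6 with n ≡ 0 (mod 4), writing d_n(q) = ∑_{k=1}^{β_n} A_n(k) q^k with β_n = binom(n,2) and r = n(n-1)/4, the sequence A_n(β_n + 1 - k)/A_n(k) for k = 2, ..., r is strictly increasing, and A_n(r+1)/A_n(r) < 1. -/

import Mathlib

open Polynomial

/-- The q-derangement polynomial, defined by the recursion
`d_n(q) = (1+q+⋯+q^{n-1}) d_{n-1}(q) + (-1)^n q^{C(n,2)}` for `n ≥ 2`, with `d_1(q) = 0`. -/
noncomputable def dq : ℕ → Polynomial ℤ
  | 0 => 0
  | 1 => 0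
  | (n + 2) =>
      (∑ i ∈ Finset.range (n + 2), X ^ i) * dq (n + 1)
        + (-1) ^ (n + 2) * X ^ ((n + 2).choose 2)

/-- `A n k` is the coefficient of `q^k` in `d_n(q)`. -/
noncomputable def A (n k : ℕ) : ℤ := (dq n).coeff k

/-!
Compare the coefficient sequence `a` of a polynomial of degree `B - 1` with its reversal
`k ↦ a (B + 1 - k)`: the ratios increase exactly when the `2 × 2` minors on adjacent columns are
positive. Multiplication by `1 + q + ⋯ + q^(M-1)` replaces an adjacent minor by a sum of `2M` minors
of the original pair, so it preserves increasing ratios.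

For even `n`, the correction term of the recursion only changes the coefficient of `q^β`, which the
ratios for `k ≥ 2` do not involve, so it suffices to treat odd `n`. There
`d_(n+2) = (1 + q + ⋯ + q^n) ((1 + q + ⋯ + q^(n+1)) d_n + q^b)` with `b = (n + 1).choose 2`. The
term `q^b` spoils monotonicity, but only in the outermost columns, and the explicit outermost
coefficients show that the second multiplication restores it.
-/

section Sequences

variable {R : Type*}

/-- `windowSum M a k = a k + a (k - 1) + ⋯ + a (k - M + 1)`. If `a` is the coefficient sequence
of `f(q)`, then `windowSum M a` is the coefficient sequence of `(1 + q + ⋯ + q^(M-1)) f(q)`. -/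
def windowSum [AddCommMonoid R] (M : ℕ) (a : ℤ → R) (k : ℤ) : R :=
  ∑ i ∈ Finset.range M, a (k - i)

/-- The sequence `a` read backwards, with indices `k` and `s - k` exchanged. -/
def reversed (s : ℤ) (a : ℤ → R) (k : ℤ) : R := a (s - k)

/-- The `2 × 2` minor on columns `i, j` of the matrix with rows `a` and `b`. Where `a` is positive,
`b / a` is increasing exactly when these minors are positive for `i < j`. -/
def rowMinor [CommRing R] (a b : ℤ → R) (i j : ℤ) : R := a i * b j - a j * b i

section AddCommMonoid

variable [AddCommMonoid R] (M : ℕ) (a b : ℤ → R) (k : ℤ)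

theorem windowSum_eq_sum_Ioc : windowSum M a k = ∑ i ∈ Finset.Ioc (k - M) k, a i := by
  refine Finset.sum_nbij' (fun i => k - i) (fun j => (k - j).toNat)
    ?_ ?_ ?_ ?_ (fun _ _ => rfl) <;>
    simp only [Finset.mem_range, Finset.mem_Ioc] <;> omega

theorem windowSum_add : windowSum M (a + b) = windowSum M a + windowSum M b :=
  funext fun _ => Finset.sum_add_distrib

theorem windowSum_comm (L : ℕ) : windowSum M (windowSum L a) = windowSum L (windowSum M a) := by
  funext k
  simp only [windowSum]
  rw [Finset.sum_comm]
  simp only [sub_right_comm]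

theorem windowSum_succ_length : windowSum (M + 1) a k = windowSum M a k + a (k - M) :=
  Finset.sum_range_succ _ _

theorem windowSum_reversed (s : ℤ) :
    windowSum M (reversed s a) = reversed (s + M - 1) (windowSum M a) := by
  funext k
  simp only [windowSum, reversed]
  rw [← Finset.sum_range_reflect]
  refine Finset.sum_congr rfl fun i hi => congrArg a ?_
  rw [Finset.mem_range] at hi
  omega

variable {M a}

theorem windowSum_eq_sum_range (ha : ∀ i ≤ 0, a i = 0) {m : ℕ} (hm : m ≤ M) :
    windowSum M a m = ∑ i ∈ Finset.range m, a (i + 1) := by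
  obtain ⟨d, rfl⟩ := Nat.exists_eq_add_of_le hm
  rw [windowSum, Finset.sum_range_add,
    Finset.sum_eq_zero (s := Finset.range d) (fun i _ => ha _ (by omega)), add_zero,
    ← Finset.sum_range_reflect]
  refine Finset.sum_congr rfl fun i hi => congrArg a ?_
  rw [Finset.mem_range] at hi
  omega

theorem windowSum_low (hM : 5 ≤ M) (ha : ∀ i ≤ 0, a i = 0) :
    windowSum M a 1 = a 1 ∧ windowSum M a 2 = a 1 + a 2 ∧ windowSum M a 3 = a 1 + a 2 + a 3 ∧
      windowSum M a 4 = a 1 + a 2 + a 3 + a 4 ∧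
      windowSum M a 5 = a 1 + a 2 + a 3 + a 4 + a 5 := by
  have partial_sum (m : ℕ) (hm : m ≤ 5) := windowSum_eq_sum_range ha (hm.trans hM)
  refine ⟨?_, ?_, ?_, ?_, ?_⟩
  · simpa [Finset.sum_range_succ] using partial_sum 1 (by decide)
  · simpa [Finset.sum_range_succ] using partial_sum 2 (by decide)
  · simpa [Finset.sum_range_succ] using partial_sum 3 (by decide)
  · simpa [Finset.sum_range_succ] using partial_sum 4 (by decide)
  · simpa [Finset.sum_range_succ] using partial_sum 5 (by decide)

theorem windowSum_top {B : ℤ} (hM : 5 ≤ M) (ha : ∀ i, B ≤ i → a i = 0) :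
    windowSum M a (B + M - 1 - 1) = a (B - 1) ∧
      windowSum M a (B + M - 1 - 2) = a (B - 1) + a (B - 2) ∧
      windowSum M a (B + M - 1 - 3) = a (B - 1) + a (B - 2) + a (B - 3) ∧
      windowSum M a (B + M - 1 - 4) = a (B - 1) + a (B - 2) + a (B - 3) + a (B - 4) := by
  obtain ⟨h₁, h₂, h₃, h₄, -⟩ :=
    windowSum_low (a := reversed B a) hM fun i hi => ha _ (by omega)
  rw [windowSum_reversed] at h₁ h₂ h₃ h₄
  exact ⟨h₁, h₂, h₃, h₄⟩

end AddCommMonoid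

theorem windowSum_add_one [AddCommGroup R] (M : ℕ) (a : ℤ → R) (k : ℤ) :
    windowSum M a (k + 1) = windowSum M a k + a (k + 1) - a (k + 1 - M) := by
  have front : windowSum (M + 1) a (k + 1) = windowSum M a k + a (k + 1) := by
    simp [windowSum, Finset.sum_range_succ']
  rw [← front, windowSum_succ_length, add_sub_cancel_right]

section CommRing

variable [CommRing R] (a b : ℤ → R)

theorem rowMinor_windowSum (M : ℕ) (k : ℤ) :
    rowMinor (windowSum M a) (windowSum M b) k (k + 1) =
      ∑ i ∈ Finset.Ioc (k - M) k, (rowMinor a b i (k + 1) + rowMinor a b (k + 1 - M) i) := by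
  simp only [rowMinor, Finset.sum_add_distrib, Finset.sum_sub_distrib, ← Finset.mul_sum,
    ← Finset.sum_mul, ← windowSum_eq_sum_Ioc, windowSum_add_one]
  ring

theorem rowMinor_reversed (s i j : ℤ) :
    rowMinor a (reversed s a) (s - j) (s - i) = rowMinor a (reversed s a) i j := by
  simp only [rowMinor, reversed, sub_sub_cancel]
  ring

theorem rowMinor_self (i : ℤ) : rowMinor a b i i = 0 := by
  rw [rowMinor, mul_comm, sub_self]

theorem rowMinor_plucker (i j l : ℤ) :
    a j * rowMinor a b i l = a l * rowMinor a b i j + a i * rowMinor a b j l := by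
  simp only [rowMinor]
  ring

end CommRing

/-- `a` is positive on the open interval `(0, B)` and vanishes elsewhere. -/
structure PosSupport [Zero R] [Preorder R] (a : ℤ → R) (B : ℤ) : Prop where
  eq_zero_of_nonpos : ∀ i ≤ 0, a i = 0
  eq_zero_of_ge : ∀ i, B ≤ i → a i = 0
  pos : ∀ i, 1 ≤ i → i < B → 0 < a i

theorem PosSupport.nonneg [Zero R] [Preorder R] {a : ℤ → R} {B : ℤ}
    (h : PosSupport a B) (i : ℤ) : 0 ≤ a i := by
  by_cases h_mem : 1 ≤ i ∧ i < B
  · exact (h.pos i h_mem.1 h_mem.2).le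
  · by_cases hi : i ≤ 0
    · exact (h.eq_zero_of_nonpos i hi).ge
    · exact (h.eq_zero_of_ge i (by omega)).ge

/-- A positive sequence on `(0, B)` for which `a (B + 1 - k) / a k` is strictly increasing,
expressed by the minors of `a` and its reversal so as to include `k = B`, where `a k = 0`. -/
structure RatioIncreasing [CommRing R] [Preorder R] (a : ℤ → R) (B : ℤ) : Prop
    extends PosSupport a B where
  rowMinor_succ_pos : ∀ k, 1 ≤ k → k < B → 0 < rowMinor a (reversed (B + 1) a) k (k + 1)

/-- A positive sequence on `(0, B)` for which `a (B + 1 - k) / a k` is strictly increasing away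
from both ends, and whose first columns still dominate enough for a window sum to restore the
monotonicity. -/
structure RatioIncreasingInside [CommRing R] [Preorder R] (a : ℤ → R) (B : ℤ) : Prop
    extends PosSupport a B where
  rowMinor_succ_pos : ∀ k, 3 ≤ k → k < B - 2 → 0 < rowMinor a (reversed (B + 1) a) k (k + 1)
  rowMinor_two_five_pos : 0 < rowMinor a (reversed (B + 1) a) 2 5
  rowMinor_one_add_two_three_pos :
    0 < rowMinor a (reversed (B + 1) a) 1 3 + rowMinor a (reversed (B + 1) a) 2 3

section Ordered

variable [CommRing R] [LinearOrder R] [IsStrictOrderedRing R] {a b : ℤ → R}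
  {B : ℤ} {M : ℕ}

/- For `p = a i`, `q = b i` this is transitivity of `b i / a i < b j / a j`; a general left column
`(p, q)` allows several columns to be added up. -/
theorem mul_lt_mul_of_rowMinor_pos {p q : R} {s e : ℤ} (hp : 0 < p) (ha : ∀ j, 0 ≤ a j)
    (ha_pos : ∀ j, s ≤ j → j < e → 0 < a j)
    (h_minor : ∀ k, s ≤ k → k < e → 0 < rowMinor a b k (k + 1)) (h_start : a s * q < p * b s)
    {j : ℤ} (hsj : s ≤ j) (hje : j ≤ e) : a j * q < p * b j := by
  induction j, hsj using Int.leInduction with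
  | base => exact h_start
  | succ j hsj ih =>
    refine lt_of_mul_lt_mul_left ?_ (ha_pos j hsj (by omega)).le
    calc a j * (a (j + 1) * q) = a (j + 1) * (a j * q) := by ring
      _ ≤ a (j + 1) * (p * b j) := mul_le_mul_of_nonneg_left (ih (by omega)).le (ha _)
      _ = p * (a (j + 1) * b j) := by ring
      _ < p * (a j * b (j + 1)) :=
          mul_lt_mul_of_pos_left (sub_pos.mp (h_minor j hsj (by omega))) hp
      _ = a j * (p * b (j + 1)) := by ring

theorem rowMinor_pos_of_succ_pos {s e : ℤ} (ha : ∀ j, 0 ≤ a j)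
    (ha_pos : ∀ j, s ≤ j → j < e → 0 < a j)
    (h_minor : ∀ k, s ≤ k → k < e → 0 < rowMinor a b k (k + 1))
    {i j : ℤ} (hi : s ≤ i) (hij : i < j) (hj : j ≤ e) : 0 < rowMinor a b i j :=
  sub_pos.mpr <| mul_lt_mul_of_rowMinor_pos (ha_pos i hi (by omega)) ha
    (fun l hl => ha_pos l (by omega)) (fun l hl => h_minor l (by omega))
    (sub_pos.mp (h_minor i hi (by omega))) hij hj

theorem rowMinor_add_rowMinor_pos {i j l : ℤ} (hi : 0 < a i) (hj : 0 < a j) (hlj : a l ≤ a j)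
    (h_lj : 0 < rowMinor a b l j) (h_ij : 0 ≤ rowMinor a b i j) :
    0 < rowMinor a b i j + rowMinor a b l i := by
  refine (mul_pos_iff_of_pos_left hj).mp ?_
  calc 0 < a i * rowMinor a b l j + (a j - a l) * rowMinor a b i j :=
        add_pos_of_pos_of_nonneg (mul_pos hi h_lj) (mul_nonneg (sub_nonneg.mpr hlj) h_ij)
    _ = a j * (rowMinor a b i j + rowMinor a b l i) := by
        rw [rowMinor_plucker a b l i j]
        ring

namespace PosSupport

theorem rowMinor_nonneg_of_le_one (h : PosSupport a B) {i : ℤ} (hi : i ≤ 1) (j : ℤ) :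
    0 ≤ rowMinor a (reversed (B + 1) a) i j := by
  rw [rowMinor, reversed, reversed, h.eq_zero_of_ge (B + 1 - i) (by omega), mul_zero, sub_zero]
  exact mul_nonneg (h.nonneg _) (h.nonneg _)

theorem rowMinor_one_two_pos (h : PosSupport a B) (hB : 2 ≤ B) :
    0 < rowMinor a (reversed (B + 1) a) 1 2 := by
  rw [rowMinor, reversed, reversed, h.eq_zero_of_ge (B + 1 - 1) (by omega), mul_zero, sub_zero]
  exact mul_pos (h.pos _ (by omega) (by omega)) (h.pos _ (by omega) (by omega))

theorem rowMinor_nonneg_of_gt (h : PosSupport a B) (i : ℤ) {j : ℤ} (hj : B < j) :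
    0 ≤ rowMinor a (reversed (B + 1) a) i j := by
  rw [rowMinor, reversed, reversed, h.eq_zero_of_ge j hj.le, zero_mul, sub_zero]
  exact mul_nonneg (h.nonneg _) (h.nonneg _)

theorem posSupport_windowSum (h : PosSupport a B) (hM : 1 ≤ M) (hB : 2 ≤ B) :
    PosSupport (windowSum M a) (B + M - 1) where
  eq_zero_of_nonpos k hk := Finset.sum_eq_zero fun i _ => h.eq_zero_of_nonpos _ (by omega)
  eq_zero_of_ge k hk := by
    rw [windowSum_eq_sum_Ioc]
    refine Finset.sum_eq_zero fun i hi => h.eq_zero_of_ge _ ?_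
    rw [Finset.mem_Ioc] at hi
    omega
  pos k hk hkB := by
    rw [windowSum_eq_sum_Ioc]
    exact Finset.sum_pos' (fun i _ => h.nonneg i)
      ⟨min k (B - 1), Finset.mem_Ioc.mpr (by omega), h.pos _ (by omega) (by omega)⟩

end PosSupport

namespace RatioIncreasing

theorem rowMinor_pos (h : RatioIncreasing a B) {i j : ℤ} (hi : 1 ≤ i) (hij : i < j) (hj : j ≤ B) :
    0 < rowMinor a (reversed (B + 1) a) i j :=
  rowMinor_pos_of_succ_pos h.nonneg h.pos h.rowMinor_succ_pos hi hij hj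

theorem rowMinor_nonneg (h : RatioIncreasing a B) {i j : ℤ} (hij : i ≤ j) :
    0 ≤ rowMinor a (reversed (B + 1) a) i j := by
  rcases hij.eq_or_lt with rfl | hlt
  · rw [rowMinor_self]
  · by_cases hi : i ≤ 1
    · exact h.rowMinor_nonneg_of_le_one hi j
    · by_cases hj : B < j
      · exact h.rowMinor_nonneg_of_gt i hj
      · exact (h.rowMinor_pos (by omega) hlt (by omega)).le

theorem apply_reversed_lt (h : RatioIncreasing a B) {k : ℤ} (hk : 1 ≤ k) (hkB : 2 * k ≤ B) :
    a (B + 1 - k) < a k := by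
  have h_minor := h.rowMinor_pos hk (show k < B + 1 - k by omega) (by omega)
  rw [rowMinor, reversed, reversed, sub_sub_cancel] at h_minor
  exact lt_of_mul_self_lt_mul_self₀ (h.nonneg k) (sub_pos.mp h_minor)

theorem ratioIncreasing_windowSum (h : RatioIncreasing a B) (hM : 2 ≤ M) (hMB : M ≤ B) :
    RatioIncreasing (windowSum M a) (B + M - 1) where
  toPosSupport := h.posSupport_windowSum (by omega) (by omega)
  rowMinor_succ_pos k hk hkB := by
    rw [show B + M - 1 + 1 = B + 1 + M - 1 by ring, ← windowSum_reversed, rowMinor_windowSum]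
    have h_window : ∀ i ∈ Finset.Ioc (k - M) k, i < k + 1 ∧ k + 1 - M ≤ i := fun i hi => by
      rw [Finset.mem_Ioc] at hi
      omega
    refine Finset.sum_pos' (fun i hi => add_nonneg (h.rowMinor_nonneg (h_window i hi).1.le)
      (h.rowMinor_nonneg (h_window i hi).2)) ?_
    by_cases hkB' : k < B
    · exact ⟨k, Finset.mem_Ioc.mpr (by omega), add_pos_of_pos_of_nonneg
        (h.rowMinor_succ_pos k hk hkB') (h.rowMinor_nonneg (by omega))⟩
    · exact ⟨k + 2 - M, Finset.mem_Ioc.mpr (by omega), add_pos_of_nonneg_of_pos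
        (h.rowMinor_nonneg (by omega)) (h.rowMinor_pos (by omega) (by omega) (by omega))⟩

end RatioIncreasing

namespace RatioIncreasingInside

theorem rowMinor_pos (h : RatioIncreasingInside a B) {i j : ℤ} (hi : 3 ≤ i) (hij : i < j)
    (hj : j ≤ B - 2) : 0 < rowMinor a (reversed (B + 1) a) i j :=
  rowMinor_pos_of_succ_pos h.nonneg (fun l _ _ => h.pos l (by omega) (by omega)) h.rowMinor_succ_pos
    hi hij hj

theorem rowMinor_nonneg (h : RatioIncreasingInside a B) {i j : ℤ} (hi : 3 ≤ i) (hij : i ≤ j)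
    (hj : j ≤ B - 2) : 0 ≤ rowMinor a (reversed (B + 1) a) i j := by
  rcases hij.eq_or_lt with rfl | hlt
  · rw [rowMinor_self]
  · exact (h.rowMinor_pos hi hlt hj).le

theorem rowMinor_two_pos (h : RatioIncreasingInside a B) {j : ℤ} (hj : 5 ≤ j) (hjB : j ≤ B - 2) :
    0 < rowMinor a (reversed (B + 1) a) 2 j :=
  sub_pos.mpr <| mul_lt_mul_of_rowMinor_pos (h.pos 2 (by omega) (by omega)) h.nonneg
    (fun l _ _ => h.pos l (by omega) (by omega)) (fun l _ => h.rowMinor_succ_pos l (by omega))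
    (sub_pos.mp h.rowMinor_two_five_pos) hj hjB

theorem rowMinor_one_add_two_pos (h : RatioIncreasingInside a B) {j : ℤ} (hj : 3 ≤ j)
    (hjB : j ≤ B - 2) :
    0 < rowMinor a (reversed (B + 1) a) 1 j + rowMinor a (reversed (B + 1) a) 2 j := by
  have add_columns : ∀ l,
      rowMinor a (reversed (B + 1) a) 1 l + rowMinor a (reversed (B + 1) a) 2 l =
        (a 1 + a 2) * reversed (B + 1) a l -
          a l * (reversed (B + 1) a 1 + reversed (B + 1) a 2) := fun l => by
    simp only [rowMinor]
    ring
  have h_start := h.rowMinor_one_add_two_three_pos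
  rw [add_columns, sub_pos] at h_start ⊢
  exact mul_lt_mul_of_rowMinor_pos
    (add_pos (h.pos 1 (by omega) (by omega)) (h.pos 2 (by omega) (by omega))) h.nonneg
    (fun l _ _ => h.pos l (by omega) (by omega)) h.rowMinor_succ_pos h_start hj hjB

theorem rowMinor_windowSum_pos_of_le (h : RatioIncreasingInside a B) (hMB : M + 6 ≤ B) {k : ℤ}
    (hk : 1 ≤ k) (hkM : k ≤ M) :
    0 < rowMinor (windowSum M a) (windowSum M (reversed (B + 1) a)) k (k + 1) := by
  rw [rowMinor_windowSum, Finset.sum_add_distrib]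
  refine add_pos_of_pos_of_nonneg ?_
    (Finset.sum_nonneg fun i _ => h.rowMinor_nonneg_of_le_one (by omega) i)
  rcases hk.eq_or_lt with rfl | hk
  · refine Finset.sum_pos' (fun i hi => ?_)
      ⟨1, Finset.mem_Ioc.mpr (by omega), h.rowMinor_one_two_pos (by omega)⟩
    exact h.rowMinor_nonneg_of_le_one (Finset.mem_Ioc.mp hi).2 _
  · have h_sub : ({1, 2} : Finset ℤ) ⊆ Finset.Ioc (k - M) k := fun i hi => by
      simp only [Finset.mem_insert, Finset.mem_singleton] at hi
      rw [Finset.mem_Ioc]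
      omega
    refine lt_of_lt_of_le ?_ (Finset.sum_le_sum_of_subset_of_nonneg h_sub fun i hi hni => ?_)
    · rw [Finset.sum_pair (by decide)]
      exact h.rowMinor_one_add_two_pos (by omega) (by omega)
    · simp only [Finset.mem_insert, Finset.mem_singleton] at hni
      rw [Finset.mem_Ioc] at hi
      by_cases hi1 : i ≤ 1
      · exact h.rowMinor_nonneg_of_le_one hi1 _
      · exact h.rowMinor_nonneg (by omega) (by omega) (by omega)

theorem rowMinor_windowSum_pos_of_eq (h : RatioIncreasingInside a B) (hM : 3 ≤ M)
    (hMB : M + 6 ≤ B) (h_two : a 2 ≤ a (M + 2)) :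
    0 < rowMinor (windowSum M a) (windowSum M (reversed (B + 1) a)) (M + 1) (M + 1 + 1) := by
  rw [rowMinor_windowSum, show (M : ℤ) + 1 + 1 - M = 2 by ring, add_sub_cancel_left,
    add_assoc, one_add_one_eq_two]
  refine Finset.sum_pos (fun i hi => ?_) (Finset.nonempty_Ioc.mpr (by omega))
  rw [Finset.mem_Ioc] at hi
  have h_last : 0 < rowMinor a (reversed (B + 1) a) 2 (M + 2) :=
    h.rowMinor_two_pos (by omega) (by omega)
  refine rowMinor_add_rowMinor_pos (h.pos i (by omega) (by omega))
    (h.pos _ (by omega) (by omega)) h_two h_last ?_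
  rcases eq_or_ne i 2 with rfl | hi2
  · exact h_last.le
  · exact h.rowMinor_nonneg (by omega) (by omega) (by omega)

theorem rowMinor_windowSum_pos_of_gt (h : RatioIncreasingInside a B) (hM : 1 ≤ M) {k : ℤ}
    (hMk : M + 1 < k) (hkB : k < B - 2) :
    0 < rowMinor (windowSum M a) (windowSum M (reversed (B + 1) a)) k (k + 1) := by
  rw [rowMinor_windowSum]
  refine Finset.sum_pos' (fun i hi => ?_) ⟨k, Finset.mem_Ioc.mpr (by omega), ?_⟩
  · rw [Finset.mem_Ioc] at hi
    exact add_nonneg (h.rowMinor_nonneg (by omega) (by omega) (by omega))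
      (h.rowMinor_nonneg (by omega) (by omega) (by omega))
  · exact add_pos_of_pos_of_nonneg (h.rowMinor_pos (by omega) (by omega) (by omega))
      (h.rowMinor_nonneg (by omega) (by omega) (by omega))

theorem ratioIncreasing_windowSum (h : RatioIncreasingInside a B) (hM : 3 ≤ M) (hMB : M + 6 ≤ B)
    (h_two : a 2 ≤ a (M + 2)) : RatioIncreasing (windowSum M a) (B + M - 1) where
  toPosSupport := h.posSupport_windowSum (by omega) (by omega)
  rowMinor_succ_pos k hk hkB := by
    rw [show B + M - 1 + 1 = B + 1 + M - 1 by ring, ← windowSum_reversed]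
    have left_part : ∀ k, 1 ≤ k → k < B - 2 →
        0 < rowMinor (windowSum M a) (windowSum M (reversed (B + 1) a)) k (k + 1) := by
      intro k hk hkB
      rcases lt_trichotomy k (M + 1) with hkM | rfl | hkM
      · exact h.rowMinor_windowSum_pos_of_le hMB hk (by omega)
      · exact h.rowMinor_windowSum_pos_of_eq hM hMB h_two
      · exact h.rowMinor_windowSum_pos_of_gt (by omega) hkM hkB
    by_cases hkB' : k < B - 2
    · exact left_part k hk hkB'
    · have h_mirror := left_part (B + M - 1 - k) (by omega) (by omega)
      rw [windowSum_reversed] at h_mirror ⊢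
      rwa [← rowMinor_reversed, show B + 1 + M - 1 - (k + 1) = B + M - 1 - k by ring,
        show B + 1 + M - 1 - k = B + M - 1 - k + 1 by ring]

end RatioIncreasingInside

end Ordered

end Sequences

section DerangementCoefficients

/-- The coefficients of `dq n`, indexed by `ℤ` so that window sums need no truncation. The recursion
is the one defining `dq`, written so that values can be computed. -/
def derangementCoeff : ℕ → ℤ → ℤ
  | 0 => 0
  | 1 => 0
  | n + 2 => windowSum (n + 2) (derangementCoeff (n + 1)) +
      Pi.single ((n + 2).choose 2 : ℤ) ((-1) ^ (n + 2))

theorem derangementCoeff_add_two (n : ℕ) :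
    derangementCoeff (n + 2) = windowSum (n + 2) (derangementCoeff (n + 1)) +
      Pi.single ((n + 2).choose 2 : ℤ) ((-1) ^ (n + 2)) := rfl

theorem derangementCoeff_of_nonpos : ∀ (n : ℕ), ∀ k ≤ 0, derangementCoeff n k = 0
  | 0, _, _ => rfl
  | 1, _, _ => rfl
  | n + 2, k, hk => by
    have h_choose : 0 < (n + 2).choose 2 := Nat.choose_pos (by omega)
    rw [derangementCoeff_add_two, Pi.add_apply, Pi.single_eq_of_ne (by omega), add_zero]
    exact Finset.sum_eq_zero fun i _ => derangementCoeff_of_nonpos (n + 1) _ (by omega)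

theorem derangementCoeff_of_choose_lt :
    ∀ (n : ℕ) (k : ℤ), n.choose 2 < k → derangementCoeff n k = 0
  | 0, _, _ => rfl
  | 1, _, _ => rfl
  | n + 2, k, hk => by
    have h_choose : (n + 2).choose 2 = (n + 1) + (n + 1).choose 2 := by
      rw [Nat.choose_succ_succ' (n + 1) 1, Nat.choose_one_right]
    rw [derangementCoeff_add_two, Pi.add_apply, Pi.single_eq_of_ne (by omega), add_zero]
    refine Finset.sum_eq_zero fun i hi => derangementCoeff_of_choose_lt (n + 1) _ ?_
    rw [Finset.mem_range] at hi
    omega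

theorem A_eq_derangementCoeff : ∀ n k : ℕ, A n k = derangementCoeff n k
  | 0, _ => by simp [A, dq, derangementCoeff]
  | 1, _ => by simp [A, dq, derangementCoeff]
  | n + 2, k => by
    rw [A, dq, derangementCoeff_add_two, coeff_add, Finset.sum_mul, finsetSum_coeff, Pi.add_apply,
      windowSum]
    congr 1
    · refine Finset.sum_congr rfl fun i _ => ?_
      rw [coeff_X_pow_mul']
      split_ifs with hik
      · rw [← Nat.cast_sub hik]
        exact A_eq_derangementCoeff (n + 1) (k - i)
      · exact (derangementCoeff_of_nonpos _ _ (by omega)).symm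
    · rw [← C_1, ← C_neg, ← C_pow, coeff_C_mul_X_pow, Pi.single_apply]
      simp only [Nat.cast_inj]

theorem choose_two_succ (n : ℕ) : ((n + 1).choose 2 : ℤ) = n.choose 2 + n := by
  rw [Nat.choose_succ_succ' n 1, Nat.choose_one_right]
  push_cast
  ring

/- For odd `n` the two correction terms combine, since
`(1 + q + ⋯ + q^(n+1)) q^b - q^(b+n+1) = (1 + q + ⋯ + q^n) q^b` with `b = (n + 1).choose 2`. -/
theorem derangementCoeff_add_two_of_odd {n : ℕ} (hn : Odd n) :
    derangementCoeff (n + 2) = windowSum (n + 1)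
      (windowSum (n + 2) (derangementCoeff n) + Pi.single ((n + 1).choose 2 : ℤ) 1) := by
  obtain ⟨m, rfl⟩ : ∃ m, n = m + 1 := ⟨n - 1, by have := hn.pos; omega⟩
  funext k
  have h_shift : (Pi.single ((m + 2).choose 2 : ℤ) 1 : ℤ → ℤ) (k - (m + 2 : ℕ)) =
      (Pi.single ((m + 3).choose 2 : ℤ) 1 : ℤ → ℤ) k := by
    simp only [Pi.single_apply, choose_two_succ (m + 2), sub_eq_iff_eq_add]
  have h_even : Even (m + 2) := hn.add_one
  have even_step : derangementCoeff (m + 2) =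
      windowSum (m + 2) (derangementCoeff (m + 1)) + Pi.single ((m + 2).choose 2 : ℤ) 1 := by
    rw [derangementCoeff_add_two, h_even.neg_one_pow]
  have odd_step : derangementCoeff (m + 3) =
      windowSum (m + 3) (derangementCoeff (m + 2)) + Pi.single ((m + 3).choose 2 : ℤ) (-1) := by
    rw [← h_even.add_one.neg_one_pow]
    exact derangementCoeff_add_two (m + 1)
  rw [show m + 1 + 2 = m + 3 from rfl, odd_step, even_step, windowSum_add, windowSum_add,
    Pi.add_apply, Pi.add_apply, Pi.add_apply, windowSum_succ_length (m + 2) (Pi.single _ _),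
    h_shift, Pi.single_neg, Pi.neg_apply, windowSum_comm]
  ring

theorem derangementCoeff_five : derangementCoeff 5 =
    fun k => if 0 ≤ k then [0, 1, 3, 5, 7, 8, 8, 6, 4, 2].getD k.toNat 0 else 0 := by
  funext k
  by_cases hk : 0 ≤ k ∧ k ≤ 10
  · obtain ⟨hk0, hk10⟩ := hk
    interval_cases k <;> decide +kernel
  · rcases not_and_or.mp hk with hk | hk
    · rw [derangementCoeff_of_nonpos _ _ (by omega), if_neg hk]
    · rw [derangementCoeff_of_choose_lt 5 k (by simpa [Nat.choose] using hk), if_pos (by omega),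
        List.getD_eq_default _ _ (by simp; omega)]

theorem derangementCoeff_seven : derangementCoeff 7 = windowSum 6 (windowSum 7
    (fun k => if 0 ≤ k then [0, 1, 3, 5, 7, 8, 8, 6, 4, 2].getD k.toNat 0 else 0) +
      Pi.single 15 1) := by
  rw [← derangementCoeff_five]
  exact derangementCoeff_add_two_of_odd (by decide)

theorem ratioIncreasing_derangementCoeff_seven : RatioIncreasing (derangementCoeff 7) 21 where
  eq_zero_of_nonpos := derangementCoeff_of_nonpos 7
  eq_zero_of_ge i hi := by
    rcases hi.eq_or_lt with rfl | hi
    · rw [derangementCoeff_seven]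
      decide
    · exact derangementCoeff_of_choose_lt 7 i hi
  pos i hi hi' := by
    rw [derangementCoeff_seven]
    interval_cases i <;> decide
  rowMinor_succ_pos i hi hi' := by
    rw [derangementCoeff_seven]
    interval_cases i <;> decide

/-- The outermost coefficients of `d_n(q)` for `n = 2u + 1`, where `B = n.choose 2`, so that
`B - 1` is the degree. The polynomials in `u` are obtained by solving the recursion for `d_n`. -/
structure OddEndCoeffs (u : ℤ) (a : ℤ → ℤ) (B : ℤ) : Prop where
  low_one : a 1 = 1
  low_two : a 2 = 2 * u - 1
  low_three : a 3 = 2 * u ^ 2 - u - 1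
  low_four : 3 * a 4 = 4 * u ^ 3 - 7 * u + 3
  low_five : 6 * a 5 = 4 * u ^ 4 + 4 * u ^ 3 - 13 * u ^ 2 + 5 * u - 6
  top_one : a (B - 1) = u
  top_two : a (B - 2) = u ^ 2
  top_three : 6 * a (B - 3) = 4 * u ^ 3 + 3 * u ^ 2 - u - 6
  top_four : 6 * a (B - 4) = 2 * u ^ 4 + 4 * u ^ 3 + u ^ 2 - 13 * u + 6

/-- The outermost coefficients of `d_(n+2)(q) / (1 + q + ⋯ + q^n)` for `n = 2u + 1`, where `B - 1`
is the degree. -/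
structure QuotientEndCoeffs (u : ℤ) (g : ℤ → ℤ) (B : ℤ) : Prop where
  low_one : g 1 = 1
  low_two : g 2 = 2 * u
  low_three : g 3 = 2 * u ^ 2 + u - 1
  low_four : 3 * g 4 = 4 * u ^ 3 + 6 * u ^ 2 - 4 * u
  low_five : 6 * g 5 = 4 * u ^ 4 + 12 * u ^ 3 - u ^ 2 - 3 * u - 6
  top_one : g (B - 1) = u + 1
  top_two : g (B - 2) = u ^ 2 + u
  top_three : 6 * g (B - 3) = 4 * u ^ 3 + 9 * u ^ 2 + 5 * u - 6
  top_four : 6 * g (B - 4) = 2 * u ^ 4 + 8 * u ^ 3 + 10 * u ^ 2 - 8 * u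

variable {u B : ℤ} {M : ℕ} {a g : ℤ → ℤ}

theorem add_single_apply_of_ne {b k : ℤ} (hk : k ≠ b) :
    (a + Pi.single b 1 : ℤ → ℤ) k = a k := by
  rw [Pi.add_apply, Pi.single_eq_of_ne hk, add_zero]

theorem add_single_apply_same (b : ℤ) : (a + Pi.single b 1 : ℤ → ℤ) b = a b + 1 := by
  rw [Pi.add_apply, Pi.single_eq_same]

theorem OddEndCoeffs.quotientEndCoeffs (h : OddEndCoeffs u a B) (ha : PosSupport a B) (hM : 5 ≤ M)
    (hB : 3 ≤ B) :
    QuotientEndCoeffs u (windowSum M a + Pi.single (B + M - 1 - 1) 1) (B + M - 1) := by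
  obtain ⟨low₁, low₂, low₃, low₄, low₅⟩ := windowSum_low hM ha.eq_zero_of_nonpos
  obtain ⟨top₁, top₂, top₃, top₄⟩ := windowSum_top hM ha.eq_zero_of_ge
  obtain ⟨l₁, l₂, l₃, l₄, l₅, t₁, t₂, t₃, t₄⟩ := h
  constructor
  case top_one => rw [add_single_apply_same, top₁, t₁]
  all_goals rw [add_single_apply_of_ne (by omega)]
  · rw [low₁, l₁]
  · rw [low₂, l₁, l₂]; ring
  · rw [low₃, l₁, l₂, l₃]; ring
  · rw [low₄, l₁, l₂, l₃]; linear_combination l₄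
  · rw [low₅, l₁, l₂, l₃]; linear_combination 2 * l₄ + l₅
  · rw [top₂, t₁, t₂]; ring
  · rw [top₃, t₁, t₂]; linear_combination t₃
  · rw [top₄, t₁, t₂]; linear_combination t₃ + t₄

theorem QuotientEndCoeffs.oddEndCoeffs (h : QuotientEndCoeffs u g B) (hg : PosSupport g B)
    (hM : 5 ≤ M) : OddEndCoeffs (u + 1) (windowSum M g) (B + M - 1) := by
  obtain ⟨low₁, low₂, low₃, low₄, low₅⟩ := windowSum_low hM hg.eq_zero_of_nonpos
  obtain ⟨top₁, top₂, top₃, top₄⟩ := windowSum_top hM hg.eq_zero_of_ge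
  obtain ⟨l₁, l₂, l₃, l₄, l₅, t₁, t₂, t₃, t₄⟩ := h
  constructor
  · rw [low₁, l₁]
  · rw [low₂, l₁, l₂]; ring
  · rw [low₃, l₁, l₂, l₃]; ring
  · rw [low₄, l₁, l₂, l₃]; linear_combination l₄
  · rw [low₅, l₁, l₂, l₃]; linear_combination 2 * l₄ + l₅
  · rw [top₁, t₁]
  · rw [top₂, t₁, t₂]; ring
  · rw [top₃, t₁, t₂]; linear_combination t₃
  · rw [top₄, t₁, t₂]; linear_combination t₃ + t₄

theorem QuotientEndCoeffs.rowMinor_two_five_pos (h : QuotientEndCoeffs u g B) (hu : 1 ≤ u) :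
    0 < rowMinor g (reversed (B + 1) g) 2 5 := by
  have six_mul : 6 * rowMinor g (reversed (B + 1) g) 2 5 =
      9 * u ^ 3 - 12 * u ^ 2 + 9 * u + 6 := by
    rw [rowMinor, reversed, reversed, show B + 1 - 5 = B - 4 by ring,
      show B + 1 - 2 = B - 1 by ring, h.low_two, h.top_one]
    linear_combination 2 * u * h.top_four - (u + 1) * h.low_five
  have : 0 ≤ u * (u - 1) ^ 2 := mul_nonneg (by omega) (sq_nonneg _)
  nlinarith

theorem QuotientEndCoeffs.rowMinor_one_add_two_three_pos (h : QuotientEndCoeffs u g B)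
    (hg : PosSupport g B) (hu : 0 ≤ u) :
    0 < rowMinor g (reversed (B + 1) g) 1 3 + rowMinor g (reversed (B + 1) g) 2 3 := by
  have eq_add_one : rowMinor g (reversed (B + 1) g) 1 3 + rowMinor g (reversed (B + 1) g) 2 3 =
      u + 1 := by
    simp only [rowMinor, reversed]
    rw [show B + 1 - 3 = B - 2 by ring, show B + 1 - 2 = B - 1 by ring,
      hg.eq_zero_of_ge (B + 1 - 1) (by omega), h.low_one, h.low_two, h.low_three, h.top_one,
      h.top_two]
    ring
  omega

theorem PosSupport.add_single (h : PosSupport a B) (hB : 2 ≤ B) :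
    PosSupport (a + Pi.single (B - 1) 1) B where
  eq_zero_of_nonpos i hi := by
    rw [add_single_apply_of_ne (by omega), h.eq_zero_of_nonpos i hi]
  eq_zero_of_ge i hi := by
    rw [add_single_apply_of_ne (by omega), h.eq_zero_of_ge i hi]
  pos i hi hiB := by
    rcases eq_or_ne i (B - 1) with rfl | hne
    · rw [add_single_apply_same]
      exact add_pos (h.pos _ hi hiB) one_pos
    · rw [add_single_apply_of_ne hne]
      exact h.pos i hi hiB

theorem RatioIncreasing.ratioIncreasingInside_add_single (h : RatioIncreasing a B) (hB : 2 ≤ B)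
    (hu : 1 ≤ u) (h_ends : QuotientEndCoeffs u (a + Pi.single (B - 1) 1) B) :
    RatioIncreasingInside (a + Pi.single (B - 1) 1) B where
  toPosSupport := h.add_single hB
  rowMinor_succ_pos k hk hkB := by
    have h_minor := h.rowMinor_succ_pos k (by omega) (by omega)
    simp only [rowMinor, reversed] at h_minor ⊢
    iterate 4 rw [add_single_apply_of_ne (by omega)]
    exact h_minor
  rowMinor_two_five_pos := h_ends.rowMinor_two_five_pos hu
  rowMinor_one_add_two_three_pos :=
    h_ends.rowMinor_one_add_two_three_pos (h.add_single hB) (by omega)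

theorem PosSupport.le_windowSum (h : PosSupport a B) {k : ℤ} (hMk : M ≤ k) (hkB : k < B) :
    (M : ℤ) ≤ windowSum M a k := by
  have one_le : ∀ i ∈ Finset.range M, 1 ≤ a (k - i) := fun i hi => by
    rw [Finset.mem_range] at hi
    exact h.pos _ (by omega) (by omega)
  simpa [windowSum] using Finset.card_nsmul_le_sum _ _ _ one_le

theorem RatioIncreasing.ratioIncreasing_oddEndCoeffs_add_two {u : ℕ} (hu : 3 ≤ u)
    (hB : 2 * u + 6 ≤ B) (h : RatioIncreasing a B) (h_ends : OddEndCoeffs u a B) :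
    RatioIncreasing
      (windowSum (2 * u + 2) (windowSum (2 * u + 3) a + Pi.single (B + 2 * u + 1) 1))
      (B + 4 * u + 3) ∧
    OddEndCoeffs (u + 1)
      (windowSum (2 * u + 2) (windowSum (2 * u + 3) a + Pi.single (B + 2 * u + 1) 1))
      (B + 4 * u + 3) := by
  have h_window := h.ratioIncreasing_windowSum (M := 2 * u + 3) (by omega) (by omega)
  have quot_ends := h_ends.quotientEndCoeffs h.toPosSupport (M := 2 * u + 3) (by omega) (by omega)
  have h_quot := h_window.ratioIncreasingInside_add_single (by omega) (by omega) quot_ends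
  rw [show B + (2 * u + 3 : ℕ) - 1 - 1 = B + 2 * u + 1 by push_cast; ring] at quot_ends h_quot
  rw [show B + 4 * u + 3 = B + (2 * u + 3 : ℕ) - 1 + (2 * u + 2 : ℕ) - 1 by push_cast; ring]
  refine ⟨h_quot.ratioIncreasing_windowSum (by omega) (by omega) ?_,
    quot_ends.oddEndCoeffs h_quot.toPosSupport (by omega)⟩
  rw [quot_ends.low_two, add_single_apply_of_ne (by omega)]
  exact le_trans (by omega) (h.le_windowSum (by omega) (by omega))

theorem oddEndCoeffs_derangementCoeff_seven : OddEndCoeffs 3 (derangementCoeff 7) 21 := by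
  rw [derangementCoeff_seven]
  constructor <;> decide

theorem two_mul_add_six_le_choose_two {u : ℕ} (hu : 3 ≤ u) : 2 * u + 6 ≤ (2 * u + 1).choose 2 := by
  have h_choose : (2 * u + 1).choose 2 = (2 * u + 1) * u := by
    rw [Nat.choose_two_right, Nat.add_sub_cancel, mul_left_comm, Nat.mul_div_cancel_left _ two_pos]
  nlinarith

theorem ratioIncreasing_derangementCoeff_odd (u : ℕ) (hu : 3 ≤ u) :
    RatioIncreasing (derangementCoeff (2 * u + 1)) ((2 * u + 1).choose 2) ∧
      OddEndCoeffs u (derangementCoeff (2 * u + 1)) ((2 * u + 1).choose 2) := by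
  induction u, hu using Nat.le_induction with
  | base =>
    exact ⟨ratioIncreasing_derangementCoeff_seven, oddEndCoeffs_derangementCoeff_seven⟩
  | succ u hu ih =>
    have h_next := ih.1.ratioIncreasing_oddEndCoeffs_add_two hu
      (by exact_mod_cast two_mul_add_six_le_choose_two hu) ih.2
    have h_mid : ((2 * u + 1).choose 2 : ℤ) + 2 * u + 1 = (2 * u + 2).choose 2 := by
      rw [choose_two_succ (2 * u + 1)]
      push_cast
      ring
    have h_top : ((2 * u + 1).choose 2 : ℤ) + 4 * u + 3 = (2 * u + 3).choose 2 := by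
      rw [choose_two_succ (2 * u + 2), ← h_mid]
      push_cast
      ring
    rw [h_mid, h_top] at h_next
    rw [show 2 * (u + 1) + 1 = 2 * u + 1 + 2 by ring,
      derangementCoeff_add_two_of_odd (odd_two_mul_add_one u)]
    exact_mod_cast h_next

theorem ratioIncreasing_windowSum_derangementCoeff_five :
    RatioIncreasing (windowSum 6 (derangementCoeff 5)) 15 := by
  have h_five : PosSupport (derangementCoeff 5) 10 := by
    refine ⟨derangementCoeff_of_nonpos 5, fun i hi => ?_, fun i hi hi' => ?_⟩
    · rcases hi.eq_or_lt with rfl | hi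
      · rw [derangementCoeff_five]
        decide
      · exact derangementCoeff_of_choose_lt 5 i hi
    · rw [derangementCoeff_five]
      interval_cases i <;> decide
  refine ⟨h_five.posSupport_windowSum (M := 6) (by decide) (by decide), fun i hi hi' => ?_⟩
  rw [derangementCoeff_five]
  interval_cases i <;> decide

theorem ratioIncreasing_windowSum_derangementCoeff_odd {u : ℕ} (hu : 2 ≤ u) :
    RatioIncreasing (windowSum (2 * u + 2) (derangementCoeff (2 * u + 1)))
      ((2 * u + 2).choose 2) := by
  rcases hu.eq_or_lt with rfl | hu
  · exact ratioIncreasing_windowSum_derangementCoeff_five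
  · have h_choose := two_mul_add_six_le_choose_two hu
    have h_top : ((2 * u + 2).choose 2 : ℤ) = (2 * u + 1).choose 2 + (2 * u + 2 : ℕ) - 1 := by
      rw [choose_two_succ (2 * u + 1)]
      push_cast
      ring
    rw [h_top]
    exact (ratioIncreasing_derangementCoeff_odd u hu).1.ratioIncreasing_windowSum (by omega)
      (by omega)

theorem exists_ratioIncreasing_eq_A {n : ℕ} (hn : 6 ≤ n) (heven : Even n) :
    ∃ a, RatioIncreasing a (n.choose 2) ∧ ∀ k < n.choose 2, A n k = a k := by
  obtain ⟨u, rfl⟩ : ∃ u, n = 2 * u + 2 := ⟨n / 2 - 1, by grind⟩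
  refine ⟨_, ratioIncreasing_windowSum_derangementCoeff_odd (by omega), fun k hk => ?_⟩
  rw [A_eq_derangementCoeff, derangementCoeff_add_two, Pi.add_apply,
    Pi.single_eq_of_ne (by omega), add_zero]

end DerangementCoefficients

theorem RatioIncreasing.strictMonoOn_div {a : ℤ → ℤ} {B : ℤ} (h : RatioIncreasing a B) :
    StrictMonoOn (fun k => (a (B + 1 - k) : ℚ) / a k) (Set.Ico 1 B) := by
  intro k hk l hl hkl
  have h_minor := h.rowMinor_pos hk.1 hkl hl.2.le
  rw [rowMinor, reversed, reversed, sub_pos, mul_comm, mul_comm (a k)] at h_minor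
  have pos_k : (0 : ℚ) < a k := by exact_mod_cast h.pos k hk.1 hk.2
  have pos_l : (0 : ℚ) < a l := by exact_mod_cast h.pos l hl.1 hl.2
  refine (div_lt_div_iff₀ pos_k pos_l).mpr ?_
  exact_mod_cast h_minor

theorem RatioIncreasing.apply_reversed_div_lt_one {a : ℤ → ℤ} {B : ℤ}
    (h : RatioIncreasing a B) {k : ℤ} (hk : 1 ≤ k) (hkB : 2 * k ≤ B) :
    (a (B + 1 - k) : ℚ) / a k < 1 := by
  have h_pos : (0 : ℚ) < a k := by exact_mod_cast h.pos k hk (by omega)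
  refine (div_lt_one h_pos).mpr ?_
  exact_mod_cast h.apply_reversed_lt hk hkB

theorem stmt_17_general (n : ℕ) (hn : 6 ≤ n) (heven : Even n) :
    StrictMonoOn (fun k => (A n (n.choose 2 + 1 - k) : ℚ) / (A n k : ℚ))
      (Set.Ico 2 (n.choose 2)) ∧
    ∀ k, 2 ≤ k → 2 * k ≤ n.choose 2 →
      (A n (n.choose 2 + 1 - k) : ℚ) / (A n k : ℚ) < 1 := by
  obtain ⟨a, h, A_eq⟩ := exists_ratioIncreasing_eq_A hn heven
  have ratio_eq {k : ℕ} (hk : 2 ≤ k) (hkB : k < n.choose 2) :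
      (A n (n.choose 2 + 1 - k) : ℚ) / (A n k : ℚ) = (a (n.choose 2 + 1 - k) : ℚ) / a k := by
    rw [A_eq k hkB, A_eq _ (by omega), Nat.cast_sub (by omega)]
    push_cast
    rfl
  refine ⟨fun k ⟨hk, hkB⟩ l ⟨hl, hlB⟩ hkl => ?_, fun k hk hkB => ?_⟩
  · simp only [ratio_eq hk hkB, ratio_eq hl hlB]
    exact h.strictMonoOn_div ⟨by omega, by omega⟩ ⟨by omega, by omega⟩ (by omega)
  · rw [ratio_eq hk (by omega)]
    exact h.apply_reversed_div_lt_one (by omega) (by omega)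

theorem choose_two_eq_two_mul_of_mod_four {n : ℕ} (hmod : n % 4 = 0) :
    n.choose 2 = 2 * (n * (n - 1) / 4) := by
  obtain ⟨m, rfl⟩ := Nat.dvd_of_mod_eq_zero hmod
  rw [Nat.choose_two_right, mul_assoc, Nat.mul_div_cancel_left _ four_pos,
    show 4 * (m * (4 * m - 1)) = 2 * (2 * (m * (4 * m - 1))) by ring,
    Nat.mul_div_cancel_left _ two_pos]

theorem stmt_17 (n : ℕ) (hn : 6 ≤ n) (hmod : n % 4 = 0) :
    (∀ k, 2 ≤ k → k + 1 ≤ n * (n - 1) / 4 →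
      (A n (n.choose 2 + 1 - k) : ℚ) / (A n k : ℚ) <
        (A n (n.choose 2 + 1 - (k + 1)) : ℚ) / (A n (k + 1) : ℚ)) ∧
    (A n (n * (n - 1) / 4 + 1) : ℚ) / (A n (n * (n - 1) / 4) : ℚ) < 1 := by
  obtain ⟨strictMono, lt_one⟩ := stmt_17_general n hn (Nat.even_iff.mpr (by omega))
  have h_choose := choose_two_eq_two_mul_of_mod_four hmod
  have two_le : 2 ≤ n * (n - 1) / 4 :=
    (Nat.le_div_iff_mul_le four_pos).mpr (Nat.mul_le_mul (by omega : 2 ≤ n) (by omega : 4 ≤ n - 1))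
  refine ⟨fun k hk hkr => strictMono ⟨hk, by omega⟩ ⟨by omega, by omega⟩ k.lt_succ_self, ?_⟩
  have middle := lt_one (n * (n - 1) / 4) two_le h_choose.ge
  rwa [show n.choose 2 + 1 - n * (n - 1) / 4 = n * (n - 1) / 4 + 1 by omega] at middle
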